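/- Let X_1,…,X_n be i.i.d. N_p(0, Σ) Gaussian vectors with Σ ∈ F(s,S,σ) having diagonal value σ_0 > 0, where 1 ≤ s ≤ S < p/2, and let W ⊆ {1,…,S} have w ≥ 1 elements. Then for every K ∈ (0,1) and every u > 0, P[ Tr(A_W(Σ_n − Σ)) ≥ σ_0 · t̃ ] ≤ exp(−u/4), where, if w = 1, t̃ = max{ √(u/(1−K)) · √((2s+1)/(n(p−S))), (u/K)(2s+1)/(n(p−S)) }, and if w > 1, t̃ = (2s+1) · max{ √(u/(2(1−K))) · √(w/(n(p−S))), (u/K) · w/(n(p−S)) }. -/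

import Mathlib

open MeasureTheory Matrix Real
open scoped ENNReal BigOperators NNReal

noncomputable def gaussianPDF {p : ℕ} (C : Matrix (Fin p) (Fin p) ℝ) (x : Fin p → ℝ) : ℝ≥0∞ :=
  ENNReal.ofReal ((2 * Real.pi) ^ (-(p : ℝ) / 2) * C.det ^ (-(1:ℝ)/2) *
    Real.exp (-(1/2) * (x ⬝ᵥ C⁻¹.mulVec x)))

/-- The centered multivariate Gaussian measure `N_p(0, C)` on `Fin p → ℝ`. -/
noncomputable def gaussianMeasure {p : ℕ} (C : Matrix (Fin p) (Fin p) ℝ) :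
    Measure (Fin p → ℝ) :=
  MeasureTheory.volume.withDensity (gaussianPDF C)

/-- The law of `n` i.i.d. `N_p(0, C)` vectors. -/
noncomputable def iidGaussian (n p : ℕ) (C : Matrix (Fin p) (Fin p) ℝ) :
    Measure (Fin n → Fin p → ℝ) :=
  MeasureTheory.volume.withDensity fun X => ∏ k, gaussianPDF C (X k)

/-- The sample covariance matrix `Σ_n = (1/n) ∑ X_k X_kᵀ`. -/
noncomputable def sampleCov {n p : ℕ} (X : Fin n → Fin p → ℝ) :
    Matrix (Fin p) (Fin p) ℝ :=
  (n : ℝ)⁻¹ • ∑ k, Matrix.of fun i j => X k i * X k j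

/-- Frobenius norm of a matrix. -/
noncomputable def frobNorm {p : ℕ} (M : Matrix (Fin p) (Fin p) ℝ) : ℝ :=
  Real.sqrt (∑ i, ∑ j, (M i j)^2)

/-- Spectral (ℓ²-operator) norm of a matrix. -/
noncomputable def specNorm {p : ℕ} (M : Matrix (Fin p) (Fin p) ℝ) : ℝ :=
  ‖Matrix.toEuclideanCLM (𝕜 := ℝ) M‖

/-- The matrix `A_j` with entries `1/(2(p-j))` on the `j`-th upper and lower diagonals. -/
noncomputable def lagMatrix (p j : ℕ) : Matrix (Fin p) (Fin p) ℝ :=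
  Matrix.of fun k l => if ((k:ℤ) - (l:ℤ)).natAbs = j then 1/(2*((p:ℝ) - j)) else 0

/-- Two-sided class `F(s,S,σ)` of sparse Toeplitz covariance matrices with
diagonal value `σ0`. -/
def memF (p s S : ℕ) (σ σ0 : ℝ) (C : Matrix (Fin p) (Fin p) ℝ) : Prop :=
  C.PosDef ∧ ∃ v : ℕ → ℝ, v 0 = σ0 ∧
    (∀ i j : Fin p, C i j = v ((i:ℤ) - (j:ℤ)).natAbs) ∧
    ∃ T : Finset ℕ, T ⊆ Finset.Icc 1 S ∧ T.card = s ∧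
      (∀ j ∈ T, σ ≤ |v j|) ∧ (∀ j, 1 ≤ j → j ≤ p - 1 → j ∉ T → v j = 0)

/-- One-sided class `F₊(s,S,σ)` of sparse Toeplitz covariance matrices with
diagonal value `σ0`. -/
def memFplus (p s S : ℕ) (σ σ0 : ℝ) (C : Matrix (Fin p) (Fin p) ℝ) : Prop :=
  C.PosDef ∧ ∃ v : ℕ → ℝ, v 0 = σ0 ∧
    (∀ i j : Fin p, C i j = v ((i:ℤ) - (j:ℤ)).natAbs) ∧
    ∃ T : Finset ℕ, T ⊆ Finset.Icc 1 S ∧ T.card = s ∧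
      (∀ j ∈ T, σ ≤ v j) ∧ (∀ j, 1 ≤ j → j ≤ p - 1 → j ∉ T → v j = 0)

/-!
Write `Σ = Q Qᵀ` with `Qᵀ A Q` diagonal. If `x ∼ N(0, Σ)`, then `xᵀ A x` is a weighted sum
`∑ dᵢ zᵢ²` of independent chi-squares whose weights are the eigenvalues of `A Σ`. From
`-log (1 - x) ≤ x + x² / (2 (1 - K))` for `|x| ≤ K`, the centred quadratic form has moment
generating function at most `exp (t² Tr((A Σ)²) / (1 - K))` as long as `2 |t| ‖A Σ‖ ≤ K`, and
Chernoff's bound gives a Bernstein inequality for `Tr(A (Σₙ - Σ))`.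

It remains to bound `‖A_W Σ‖` and `Tr((A_W Σ)²)`. Every row of `Σ` has at most `2 s + 1` nonzero
entries, each at most `σ₀`, while the entries of `A_W` are at most `1 / (2 (p - S))` with absolute
sum at most `w`. The spectral radius is controlled by the `ℓ^∞` operator norm (largest absolute row
sum). The Frobenius norm of `A_W Σ`, which dominates the trace, admits two estimates:
Cauchy–Schwarz along the rows of `A_W` gives the threshold for `w = 1`, and Schur's test for `Σ`
gives the one for `w > 1`.
-/

section ProductMeasure

variable {ι : Type*} [Fintype ι] {E : ι → Type*} [∀ i, MeasurableSpace (E i)]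
  {μ : ∀ i, Measure (E i)}

theorem lmarginal_prod [DecidableEq ι] [∀ i, SigmaFinite (μ i)] {f : ∀ i, E i → ℝ≥0∞}
    (hf : ∀ i, Measurable (f i)) (s : Finset ι) (x : ∀ i, E i) :
    (∫⋯∫⁻_s, fun y => ∏ i, f i (y i) ∂μ) x =
      (∏ i ∈ s, ∫⁻ y, f i y ∂μ i) * ∏ i ∈ sᶜ, f i (x i) := by
  have hprod : Measurable fun y : ∀ i, E i => ∏ i, f i (y i) := by fun_prop
  induction s using Finset.induction_on generalizing x with
  | empty => simp
  | insert i s hi ih =>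
    have hcompl (y : E i) : ∏ j ∈ sᶜ, f j (Function.update x i y j) =
        f i y * ∏ j ∈ (insert i s)ᶜ, f j (x j) := by
      rw [Finset.compl_insert, ← Finset.mul_prod_erase _ _ (Finset.mem_compl.mpr hi),
        Function.update_self]
      congr 1
      refine Finset.prod_congr rfl fun j hj => ?_
      rw [Function.update_of_ne (Finset.ne_of_mem_erase hj)]
    simp_rw [lmarginal_insert _ hprod hi, ih, hcompl]
    rw [lintegral_const_mul _ ((hf i).mul_const _), lintegral_mul_const _ (hf i),
      Finset.prod_insert hi]
    ring

theorem lintegral_pi_prod [∀ i, SigmaFinite (μ i)] {f : ∀ i, E i → ℝ≥0∞}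
    (hf : ∀ i, Measurable (f i)) :
    ∫⁻ x, ∏ i, f i (x i) ∂Measure.pi μ = ∏ i, ∫⁻ y, f i y ∂μ i := by
  classical
  obtain hE | ⟨⟨x⟩⟩ := isEmpty_or_nonempty (∀ i, E i)
  · obtain ⟨i, hi⟩ := isEmpty_pi.mp hE
    rw [Measure.eq_zero_of_isEmpty (Measure.pi μ), lintegral_zero_measure,
      Finset.prod_eq_zero (Finset.mem_univ i)]
    rw [Measure.eq_zero_of_isEmpty (μ i), lintegral_zero_measure]
  · simpa using lmarginal_prod (μ := μ) hf Finset.univ x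

theorem pi_withDensity [∀ i, SigmaFinite (μ i)] {f : ∀ i, E i → ℝ≥0∞}
    (hf : ∀ i, Measurable (f i)) [∀ i, SigmaFinite ((μ i).withDensity (f i))] :
    Measure.pi (fun i => (μ i).withDensity (f i)) =
      (Measure.pi μ).withDensity fun x => ∏ i, f i (x i) := by
  refine Measure.pi_eq fun s hs => ?_
  rw [withDensity_apply _ (MeasurableSet.univ_pi hs), Measure.restrict_pi_pi,
    lintegral_pi_prod hf]
  simp_rw [withDensity_apply _ (hs _)]

theorem map_withDensity_comp {α β : Type*} [MeasurableSpace α] [MeasurableSpace β]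
    {μ : Measure α} {f : α → β} {h : β → ℝ≥0∞} (hf : Measurable f) (hh : Measurable h) :
    (μ.withDensity (h ∘ f)).map f = (μ.map f).withDensity h := by
  ext s hs
  rw [Measure.map_apply hf hs, withDensity_apply _ (hf hs), withDensity_apply _ hs,
    setLIntegral_map hs hh hf]
  rfl

open ProbabilityTheory (mgf) in
theorem mgf_sum_pi [∀ i, SigmaFinite (μ i)] (X : ∀ i, E i → ℝ) (t : ℝ) :
    mgf (fun x => ∑ i, X i (x i)) (Measure.pi μ) t = ∏ i, mgf (X i) (μ i) t := by
  simp_rw [mgf, Finset.mul_sum, Real.exp_sum]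
  exact integral_fintype_prod_eq_prod fun i y => Real.exp (t * X i y)

end ProductMeasure

section Bernstein

open ProbabilityTheory (mgf integrableExpSet measure_ge_le_exp_mul_mgf)

/-- Chernoff at `t = x / v` in the Gaussian regime `x ≤ b * v`, and at the endpoint `t = b`
beyond it. -/
theorem measureReal_ge_le_exp_neg_of_mgf_le {Ω : Type*} [MeasurableSpace Ω] {μ : Measure Ω}
    [IsFiniteMeasure μ] {X : Ω → ℝ} {b v c x : ℝ} (hb : 0 < b) (hv : 0 < v)
    (hX : Set.Icc 0 b ⊆ integrableExpSet X μ)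
    (hmgf : ∀ t ∈ Set.Icc 0 b, mgf X μ t ≤ Real.exp (t ^ 2 * v / 2))
    (hx : max (√(2 * v * c)) (2 * c / b) ≤ x) :
    μ.real {ω | x ≤ X ω} ≤ Real.exp (-c) := by
  obtain ⟨hsqrt, hlin⟩ := max_le_iff.mp hx
  have hx0 : 0 ≤ x := (Real.sqrt_nonneg _).trans hsqrt
  have hsq : 2 * v * c ≤ x ^ 2 := (Real.sqrt_le_left hx0).mp hsqrt
  have hbx : 2 * c ≤ x * b := (div_le_iff₀ hb).mp hlin
  obtain ⟨t, ht, hexp⟩ : ∃ t ∈ Set.Icc 0 b, -t * x + t ^ 2 * v / 2 ≤ -c := by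
    obtain h | h := le_total (x / v) b
    · refine ⟨x / v, ⟨by positivity, h⟩, ?_⟩
      have : -(x / v) * x + (x / v) ^ 2 * v / 2 = -(x ^ 2 / (2 * v)) := by field_simp; ring
      rw [this, neg_le_neg_iff, le_div_iff₀ (by positivity)]
      linarith
    · refine ⟨b, ⟨hb.le, le_rfl⟩, ?_⟩
      have : b * v ≤ x := (le_div_iff₀ hv).mp h
      nlinarith
  calc μ.real {ω | x ≤ X ω} ≤ Real.exp (-t * x) * mgf X μ t :=
        measure_ge_le_exp_mul_mgf x ht.1 (hX ht)
    _ ≤ Real.exp (-t * x) * Real.exp (t ^ 2 * v / 2) := by gcongr; exact hmgf t ht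
    _ ≤ Real.exp (-c) := by rw [← Real.exp_add]; exact Real.exp_le_exp.mpr hexp

end Bernstein

section GaussianMeasure

open ProbabilityTheory (gaussianReal gaussianPDFReal)

variable {p : ℕ} {C Q : Matrix (Fin p) (Fin p) ℝ}

@[fun_prop]
theorem measurable_gaussianPDF (C : Matrix (Fin p) (Fin p) ℝ) : Measurable (gaussianPDF C) := by
  unfold gaussianPDF dotProduct mulVec dotProduct
  fun_prop

theorem mulVec_dotProduct_mulVec_mulVec {m n R : Type*} [Fintype m] [Fintype n] [CommSemiring R]
    (Q : Matrix m n R) (A : Matrix m m R) (z : n → R) :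
    (Q *ᵥ z) ⬝ᵥ (A *ᵥ (Q *ᵥ z)) = z ⬝ᵥ ((Qᵀ * A * Q) *ᵥ z) := by
  rw [← mulVec_mulVec, ← mulVec_mulVec, dotProduct_mulVec z, vecMul_transpose]

theorem gaussianPDF_one (z : Fin p → ℝ) :
    gaussianPDF 1 z = ∏ i, ProbabilityTheory.gaussianPDF 0 1 (z i) := by
  have hconst : (2 * π) ^ (-(p : ℝ) / 2) = ∏ _i : Fin p, (√(2 * π))⁻¹ := by
    rw [Finset.prod_const, Finset.card_univ, Fintype.card_fin, Real.sqrt_eq_rpow,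
      ← Real.rpow_neg (by positivity), ← Real.rpow_mul_natCast (by positivity)]
    congr 1
    ring
  simp only [gaussianPDF, ProbabilityTheory.gaussianPDF]
  rw [← ENNReal.ofReal_prod_of_nonneg fun i _ => ProbabilityTheory.gaussianPDFReal_nonneg 0 1 (z i)]
  simp only [gaussianPDFReal, Finset.prod_mul_distrib, ← Real.exp_sum, det_one, Real.one_rpow,
    inv_one, one_mulVec, NNReal.coe_one, mul_one, sub_zero, hconst]
  congr 3
  simp only [dotProduct, Finset.mul_sum]
  exact Finset.sum_congr rfl fun i _ => by ring

theorem gaussianMeasure_one :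
    gaussianMeasure (1 : Matrix (Fin p) (Fin p) ℝ) = Measure.pi fun _ => gaussianReal 0 1 := by
  have hdensity : gaussianReal 0 1 = volume.withDensity (ProbabilityTheory.gaussianPDF 0 1) :=
    ProbabilityTheory.gaussianReal_of_var_ne_zero 0 one_ne_zero
  have : SigmaFinite (volume.withDensity (ProbabilityTheory.gaussianPDF 0 1)) := by
    rw [← hdensity]; infer_instance
  simp_rw [hdensity, gaussianMeasure, funext gaussianPDF_one]
  exact (pi_withDensity fun _ => ProbabilityTheory.measurable_gaussianPDF 0 1).symm

theorem abs_det_mul_gaussianPDF_mulVec (hC : C.PosDef) (hQ : Q.det ≠ 0) (z : Fin p → ℝ) :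
    ENNReal.ofReal |Q.det| * gaussianPDF (Q * C * Qᵀ) (Q *ᵥ z) = gaussianPDF C z := by
  have hinv : Qᵀ * (Q * C * Qᵀ)⁻¹ * Q = C⁻¹ := by
    have hu : IsUnit Q.det := isUnit_iff_ne_zero.mpr hQ
    rw [Matrix.mul_inv_rev, Matrix.mul_inv_rev, ← Matrix.mul_assoc,
      mul_nonsing_inv _ (by rwa [det_transpose]), Matrix.one_mul, Matrix.mul_assoc,
      nonsing_inv_mul _ hu, Matrix.mul_one]
  have hdet : (Q * C * Qᵀ).det ^ (-(1 : ℝ) / 2) = |Q.det|⁻¹ * C.det ^ (-(1 : ℝ) / 2) := by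
    have : (Q * C * Qᵀ).det = |Q.det| ^ (2 : ℝ) * C.det := by
      rw [det_mul, det_mul, det_transpose, Real.rpow_two, sq_abs]
      ring
    rw [this, Real.mul_rpow (by positivity) hC.det_pos.le, ← Real.rpow_mul (abs_nonneg _),
      ← Real.rpow_neg_one]
    norm_num
  rw [gaussianPDF, gaussianPDF, mulVec_dotProduct_mulVec_mulVec, hinv, hdet,
    ← ENNReal.ofReal_mul (abs_nonneg _)]
  congr 1
  field_simp

theorem map_mulVec_gaussianMeasure (hC : C.PosDef) (hQ : Q.det ≠ 0) :
    (gaussianMeasure C).map (Q *ᵥ ·) = gaussianMeasure (Q * C * Qᵀ) := by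
  have hmul : Measurable (Q *ᵥ · : (Fin p → ℝ) → Fin p → ℝ) := by fun_prop
  have hvol : volume.map (Q *ᵥ ·) = ENNReal.ofReal |Q.det⁻¹| • volume :=
    Real.map_matrix_volume_pi_eq_smul_volume_pi hQ
  have hscale : ENNReal.ofReal |Q.det| * ENNReal.ofReal |Q.det⁻¹| = 1 := by
    rw [← ENNReal.ofReal_mul (abs_nonneg _), ← abs_mul, mul_inv_cancel₀ hQ, abs_one,
      ENNReal.ofReal_one]
  calc (gaussianMeasure C).map (Q *ᵥ ·)
      = (ENNReal.ofReal |Q.det| •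
          volume.withDensity (gaussianPDF (Q * C * Qᵀ) ∘ (Q *ᵥ ·))).map (Q *ᵥ ·) := by
        rw [← withDensity_smul _ (by fun_prop), gaussianMeasure]
        exact congrArg (fun f => (volume.withDensity f).map (Q *ᵥ ·))
          (funext fun z => (abs_det_mul_gaussianPDF_mulVec hC hQ z).symm)
    _ = gaussianMeasure (Q * C * Qᵀ) := by
        rw [Measure.map_smul, map_withDensity_comp hmul (measurable_gaussianPDF _), hvol,
          withDensity_smul_measure, smul_smul, hscale, one_smul, gaussianMeasure]

theorem gaussianMeasure_mul_transpose (hQ : Q.det ≠ 0) :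
    gaussianMeasure (Q * Qᵀ) = (Measure.pi fun _ => gaussianReal 0 1).map (Q *ᵥ ·) := by
  rw [← gaussianMeasure_one, map_mulVec_gaussianMeasure PosDef.one hQ, Matrix.mul_one]

end GaussianMeasure

section Diagonalization

open scoped ComplexOrder MatrixOrder in
theorem exists_mul_conjTranspose_eq_and_conjTranspose_mul_mul_eq_diagonal {n 𝕜 : Type*} [Fintype n]
    [DecidableEq n] [RCLike 𝕜] {C A : Matrix n n 𝕜} (hC : C.PosDef) (hA : A.IsHermitian) :
    ∃ (Q : Matrix n n 𝕜) (d : n → ℝ), Q.det ≠ 0 ∧ Q * Qᴴ = C ∧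
      Qᴴ * A * Q = diagonal (RCLike.ofReal ∘ d) := by
  obtain ⟨P, hP⟩ := CStarAlgebra.nonneg_iff_eq_mul_star_self.mp hC.posSemidef.nonneg
  have hB : (Pᴴ * A * P).IsHermitian := isHermitian_conjTranspose_mul_mul P hA
  let U := hB.eigenvectorUnitary
  have hQ : (P * (U : Matrix n n 𝕜)) * (P * (U : Matrix n n 𝕜))ᴴ = C := by
    rw [conjTranspose_mul, ← star_eq_conjTranspose, Matrix.mul_assoc,
      ← Matrix.mul_assoc (U : Matrix n n 𝕜), Unitary.mul_star_self_of_mem U.2, Matrix.one_mul, hP,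
      star_eq_conjTranspose]
  refine ⟨P * U, hB.eigenvalues, fun hdet => hC.det_pos.ne' ?_, hQ, ?_⟩
  · rw [← hQ, det_mul, hdet, zero_mul]
  · have := hB.conjStarAlgAut_star_eigenvectorUnitary
    rw [Unitary.conjStarAlgAut_star_apply] at this
    rw [← this, conjTranspose_mul, star_eq_conjTranspose]
    simp only [Matrix.mul_assoc, U]

variable {m n 𝕜 : Type*} [Fintype m] [Fintype n] [DecidableEq n]

theorem trace_mul_mul_eq_sum_of_mul_mul_eq_diagonal [CommSemiring 𝕜] {A : Matrix m m 𝕜}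
    {Q : Matrix m n 𝕜} {R : Matrix n m 𝕜} {d : n → 𝕜} (hd : R * A * Q = diagonal d) :
    (A * (Q * R)).trace = ∑ i, d i := by
  rw [← Matrix.mul_assoc, trace_mul_comm, ← Matrix.mul_assoc, hd, trace_diagonal]

theorem trace_mul_mul_sq_eq_sum_of_mul_mul_eq_diagonal [CommSemiring 𝕜] {A : Matrix m m 𝕜}
    {Q : Matrix m n 𝕜} {R : Matrix n m 𝕜} {d : n → 𝕜} (hd : R * A * Q = diagonal d) :
    (A * (Q * R) * (A * (Q * R))).trace = ∑ i, d i ^ 2 := by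
  have : A * (Q * R) * (A * (Q * R)) = A * Q * (diagonal d * R) := by
    rw [← hd]
    simp only [Matrix.mul_assoc]
  rw [this, trace_mul_comm, Matrix.mul_assoc, ← Matrix.mul_assoc R, hd, diagonal_mul_diagonal,
    trace_diagonal]
  simp only [sq]

open scoped Matrix.Norms.Operator in
theorem norm_le_linfty_opNorm_of_mul_mul_eq_diagonal [NontriviallyNormedField 𝕜]
    [CompleteSpace 𝕜]
    {A Q R : Matrix n n 𝕜} {d : n → 𝕜} (hd : R * A * Q = diagonal d) (i : n) :
    ‖d i‖ ≤ ‖A * (Q * R)‖ := by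
  obtain h | h := eq_or_ne (d i) 0
  · simp [h]
  have : Nonempty n := ⟨i⟩
  have : @CompleteSpace (Matrix n n 𝕜) PseudoMetricSpace.toUniformSpace :=
    FiniteDimensional.complete 𝕜 _
  have hmem : d i ∈ spectrum 𝕜 (R * (A * Q)) \ {0} :=
    ⟨by rw [← Matrix.mul_assoc, hd, spectrum_diagonal]; exact Set.mem_range_self i, h⟩
  rw [spectrum.nonzero_mul_comm, Matrix.mul_assoc] at hmem
  exact spectrum.norm_le_norm_of_mem hmem.1

end Diagonalization

section ChiSquare

theorem neg_log_one_sub_le {x K : ℝ} (hK : K < 1) (hx : |x| ≤ K) :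
    -Real.log (1 - x) ≤ x + x ^ 2 / (2 * (1 - K)) := by
  obtain ⟨hKx, hxK⟩ := abs_le.mp hx
  have hpos : 0 < 1 - x := by linarith
  obtain h | h := le_total 0 x
  · -- `log y ≤ sinh (log y) = (y - y⁻¹) / 2` at `y = (1 - x)⁻¹ ≥ 1`
    have hlog : 0 ≤ Real.log (1 - x)⁻¹ := Real.log_nonneg ((one_le_inv₀ hpos).mpr (by linarith))
    have hsinh := Real.self_le_sinh_iff.mpr hlog
    rw [Real.sinh_log (inv_pos.mpr hpos), Real.log_inv, inv_inv] at hsinh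
    calc -Real.log (1 - x) ≤ ((1 - x)⁻¹ - (1 - x)) / 2 := hsinh
      _ = x + x ^ 2 / (2 * (1 - x)) := by field_simp; ring
      _ ≤ x + x ^ 2 / (2 * (1 - K)) := by gcongr
  · have hlog := Real.le_log_one_add_of_nonneg (neg_nonneg.mpr h)
    rw [← sub_eq_add_neg] at hlog
    have hfrac : -x - x ^ 2 / 2 ≤ 2 * -x / (-x + 2) := by
      rw [le_div_iff₀ (by linarith)]
      nlinarith [mul_nonneg (neg_nonneg.mpr h) (sq_nonneg x)]
    have hsq : x ^ 2 / 2 ≤ x ^ 2 / (2 * (1 - K)) :=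
      div_le_div_of_nonneg_left (sq_nonneg x) (by linarith) (by linarith [abs_nonneg x])
    linarith

theorem inv_sqrt_one_sub_le_exp {x K : ℝ} (hK : K < 1) (hx : |x| ≤ K) :
    (√(1 - x))⁻¹ ≤ Real.exp (x / 2 + x ^ 2 / (4 * (1 - K))) := by
  have hpos : 0 < 1 - x := by linarith [le_abs_self x]
  rw [← Real.exp_log (inv_pos.mpr (Real.sqrt_pos.mpr hpos)), Real.log_inv,
    Real.log_sqrt hpos.le, Real.exp_le_exp]
  have hsplit : x / 2 + x ^ 2 / (4 * (1 - K)) = (x + x ^ 2 / (2 * (1 - K))) / 2 := by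
    have : 1 - K ≠ 0 := by linarith
    field_simp
    ring
  linarith [neg_log_one_sub_le hK hx]

open ProbabilityTheory (gaussianReal mgf)

theorem mgf_sq_gaussianReal {t : ℝ} (ht : 2 * t < 1) :
    mgf (· ^ 2) (gaussianReal 0 1) t = (√(1 - 2 * t))⁻¹ := by
  have hdensity (x : ℝ) : ProbabilityTheory.gaussianPDFReal 0 1 x • Real.exp (t * x ^ 2) =
      (√(2 * π))⁻¹ * Real.exp (-(1 / 2 - t) * x ^ 2) := by
    rw [ProbabilityTheory.gaussianPDFReal, smul_eq_mul, mul_assoc, ← Real.exp_add,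
      NNReal.coe_one, mul_one]
    congr 2
    ring
  have hpos : 0 < 1 - 2 * t := by linarith
  rw [mgf, ProbabilityTheory.integral_gaussianReal_eq_integral_smul one_ne_zero]
  simp_rw [hdensity]
  rw [integral_const_mul, integral_gaussian, ← Real.sqrt_inv, ← Real.sqrt_inv,
    ← Real.sqrt_mul (by positivity)]
  congr 1
  have : 1 / 2 - t = (1 - 2 * t) / 2 := by ring
  rw [this]
  field_simp

end ChiSquare

section QuadraticForm

open ProbabilityTheory (gaussianReal mgf)
open scoped Matrix.Norms.Operator

variable {p : ℕ} {A C Q : Matrix (Fin p) (Fin p) ℝ} {d : Fin p → ℝ} {K t : ℝ}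

theorem isProbabilityMeasure_gaussianMeasure (hC : C.PosDef) :
    IsProbabilityMeasure (gaussianMeasure C) := by
  obtain ⟨Q, -, hQ, rfl, -⟩ :=
    exists_mul_conjTranspose_eq_and_conjTranspose_mul_mul_eq_diagonal hC isHermitian_zero
  rw [conjTranspose_eq_transpose_of_trivial, gaussianMeasure_mul_transpose hQ]
  exact Measure.isProbabilityMeasure_map (by fun_prop)

@[fun_prop]
theorem measurable_dotProduct_mulVec (A : Matrix (Fin p) (Fin p) ℝ) :
    Measurable fun x : Fin p → ℝ => x ⬝ᵥ (A *ᵥ x) := by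
  unfold dotProduct mulVec dotProduct
  fun_prop

theorem mgf_quadratic_gaussianMeasure (hQ : Q.det ≠ 0) (hd : Qᵀ * A * Q = diagonal d)
    (ht : ∀ i, 2 * (t * d i) < 1) :
    mgf (fun x => x ⬝ᵥ (A *ᵥ x)) (gaussianMeasure (Q * Qᵀ)) t =
      ∏ i, (√(1 - 2 * (t * d i)))⁻¹ := by
  have hsum : (fun x => x ⬝ᵥ (A *ᵥ x)) ∘ (Q *ᵥ ·) = fun z => ∑ i, d i * z i ^ 2 := by
    ext z
    rw [Function.comp_apply, mulVec_dotProduct_mulVec_mulVec, hd, dotProduct]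
    simp only [mulVec_diagonal]
    exact Finset.sum_congr rfl fun i _ => by ring
  rw [gaussianMeasure_mul_transpose hQ, ProbabilityTheory.mgf_map (by fun_prop) (by fun_prop),
    hsum, mgf_sum_pi (fun i y => d i * y ^ 2)]
  refine Finset.prod_congr rfl fun i _ => ?_
  rw [ProbabilityTheory.mgf_const_mul, mul_comm, mgf_sq_gaussianReal (ht i)]

theorem exists_mgf_quadratic_sub_trace_eq (hC : C.PosDef) (hA : A.IsSymm) :
    ∃ d : Fin p → ℝ, (∀ i, |d i| ≤ ‖A * C‖) ∧ ∑ i, d i ^ 2 = (A * C * (A * C)).trace ∧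
      ∀ t, (∀ i, 2 * (t * d i) < 1) →
        mgf (fun x => x ⬝ᵥ (A *ᵥ x) - (A * C).trace) (gaussianMeasure C) t =
          ∏ i, (√(1 - 2 * (t * d i)))⁻¹ * Real.exp (-(t * d i)) := by
  obtain ⟨Q, d, hQ, rfl, hd⟩ :=
    exists_mul_conjTranspose_eq_and_conjTranspose_mul_mul_eq_diagonal hC
      (isHermitian_iff_isSymm.mpr hA)
  simp only [conjTranspose_eq_transpose_of_trivial] at hd ⊢
  change Qᵀ * A * Q = diagonal d at hd
  refine ⟨d, norm_le_linfty_opNorm_of_mul_mul_eq_diagonal hd,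
    (trace_mul_mul_sq_eq_sum_of_mul_mul_eq_diagonal hd).symm, fun t ht => ?_⟩
  simp only [sub_eq_add_neg (_ ⬝ᵥ _)]
  rw [ProbabilityTheory.mgf_add_const, mgf_quadratic_gaussianMeasure hQ hd ht,
    trace_mul_mul_eq_sum_of_mul_mul_eq_diagonal hd, Finset.prod_mul_distrib, ← Real.exp_sum,
    Finset.sum_neg_distrib, mul_neg, Finset.mul_sum]

theorem mgf_quadratic_sub_trace_mem_Ioc (hC : C.PosDef) (hA : A.IsSymm) (hK : K < 1)
    (ht : 2 * (|t| * ‖A * C‖) ≤ K) :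
    mgf (fun x => x ⬝ᵥ (A *ᵥ x) - (A * C).trace) (gaussianMeasure C) t ∈
      Set.Ioc 0 (Real.exp (t ^ 2 * (A * C * (A * C)).trace / (1 - K))) := by
  obtain ⟨d, hd, hsq, hmgf⟩ := exists_mgf_quadratic_sub_trace_eq hC hA
  have hdK (i : Fin p) : |2 * (t * d i)| ≤ K := by
    rw [abs_mul, abs_two, abs_mul]
    have := mul_le_mul_of_nonneg_left (hd i) (abs_nonneg t)
    linarith
  have hd1 (i : Fin p) : 2 * (t * d i) < 1 := (le_abs_self _).trans_lt ((hdK i).trans_lt hK)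
  rw [hmgf t hd1]
  refine ⟨Finset.prod_pos fun i _ => ?_, ?_⟩
  · have : 0 < 1 - 2 * (t * d i) := sub_pos.mpr (hd1 i)
    positivity
  · rw [← hsq, Finset.mul_sum, Finset.sum_div, Real.exp_sum]
    refine Finset.prod_le_prod (fun i _ => by positivity) fun i _ => ?_
    calc (√(1 - 2 * (t * d i)))⁻¹ * Real.exp (-(t * d i))
        ≤ Real.exp (2 * (t * d i) / 2 + (2 * (t * d i)) ^ 2 / (4 * (1 - K))) *
            Real.exp (-(t * d i)) := by
          gcongr
          exact inv_sqrt_one_sub_le_exp hK (hdK i)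
      _ = Real.exp (t ^ 2 * d i ^ 2 / (1 - K)) := by
          have : 1 - K ≠ 0 := by linarith
          rw [← Real.exp_add]
          congr 1
          field_simp
          ring

end QuadraticForm

section SampleCovariance

open ProbabilityTheory (mgf)
open scoped Matrix.Norms.Operator

variable {p n : ℕ} {A C : Matrix (Fin p) (Fin p) ℝ} {K L V t u x : ℝ}

theorem iidGaussian_eq_pi (hC : C.PosDef) :
    iidGaussian n p C = Measure.pi fun _ => gaussianMeasure C := by
  have := isProbabilityMeasure_gaussianMeasure hC
  have : SigmaFinite (volume.withDensity (gaussianPDF C)) :=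
    inferInstanceAs (SigmaFinite (gaussianMeasure C))
  exact (pi_withDensity fun _ => measurable_gaussianPDF C).symm

theorem isProbabilityMeasure_iidGaussian (hC : C.PosDef) :
    IsProbabilityMeasure (iidGaussian n p C) := by
  have := isProbabilityMeasure_gaussianMeasure hC
  rw [iidGaussian_eq_pi hC]
  infer_instance

theorem trace_mul_sampleCov_sub (hn : n ≠ 0) (A C : Matrix (Fin p) (Fin p) ℝ)
    (X : Fin n → Fin p → ℝ) :
    (A * (sampleCov X - C)).trace =
      ∑ k, (n : ℝ)⁻¹ * (X k ⬝ᵥ (A *ᵥ X k) - (A * C).trace) := by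
  have hcov : sampleCov X = (n : ℝ)⁻¹ • ∑ k, vecMulVec (X k) (X k) := rfl
  have hn' : (n : ℝ) ≠ 0 := Nat.cast_ne_zero.mpr hn
  rw [Matrix.mul_sub, trace_sub, hcov, mul_smul_comm, trace_smul, Matrix.mul_sum, trace_sum,
    ← Finset.mul_sum, Finset.sum_sub_distrib]
  simp_rw [mul_vecMulVec, trace_vecMulVec, dotProduct_comm (A *ᵥ _)]
  simp only [smul_eq_mul, Finset.sum_const, Finset.card_univ, Fintype.card_fin, nsmul_eq_mul]
  field_simp

theorem mgf_trace_mul_sampleCov_sub (hn : n ≠ 0) (hC : C.PosDef) :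
    mgf (fun X => (A * (sampleCov X - C)).trace) (iidGaussian n p C) t =
      mgf (fun x => x ⬝ᵥ (A *ᵥ x) - (A * C).trace) (gaussianMeasure C) (t / n) ^ n := by
  have := isProbabilityMeasure_gaussianMeasure hC
  simp_rw [trace_mul_sampleCov_sub hn, iidGaussian_eq_pi hC]
  rw [mgf_sum_pi (fun _ x => (n : ℝ)⁻¹ * (x ⬝ᵥ (A *ᵥ x) - (A * C).trace))]
  simp_rw [ProbabilityTheory.mgf_const_mul, inv_mul_eq_div]
  rw [Finset.prod_const, Finset.card_univ, Fintype.card_fin]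

theorem mgf_trace_mul_sampleCov_sub_mem_Ioc (hn : 0 < n) (hC : C.PosDef) (hA : A.IsSymm)
    (hK : K < 1) (ht : 2 * (|t| * ‖A * C‖) ≤ n * K) :
    mgf (fun X => (A * (sampleCov X - C)).trace) (iidGaussian n p C) t ∈
      Set.Ioc 0 (Real.exp (t ^ 2 * (A * C * (A * C)).trace / (n * (1 - K)))) := by
  have hn' : (0 : ℝ) < n := Nat.cast_pos.mpr hn
  have htn : 2 * (|t / n| * ‖A * C‖) ≤ K := by
    rw [abs_div, Nat.abs_cast]
    calc 2 * (|t| / n * ‖A * C‖) = 2 * (|t| * ‖A * C‖) / n := by ring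
      _ ≤ K := (div_le_iff₀' hn').mpr ht
  obtain ⟨hpos, hle⟩ := mgf_quadratic_sub_trace_mem_Ioc hC hA hK htn
  rw [mgf_trace_mul_sampleCov_sub hn.ne' hC]
  refine ⟨pow_pos hpos n, (pow_le_pow_left₀ hpos.le hle n).trans_eq ?_⟩
  rw [← Real.exp_nat_mul]
  congr 1
  have : 1 - K ≠ 0 := by linarith
  field_simp

/-- `K` trades the variance proxy `2 * V / (n * (1 - K))` of the Gaussian regime against the range
`t ≤ n * K / (2 * L)` on which it is valid. -/
theorem iidGaussian_trace_ge_le (hn : 0 < n) (hC : C.PosDef) (hA : A.IsSymm)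
    (hL : ‖A * C‖ ≤ L) (hL0 : 0 < L) (hV : (A * C * (A * C)).trace ≤ V) (hV0 : 0 < V)
    (hK : K ∈ Set.Ioo 0 1) (hx : max (√(u / (1 - K)) * √(V / n)) (u / K * (L / n)) ≤ x) :
    iidGaussian n p C {X | x ≤ (A * (sampleCov X - C)).trace} ≤
      ENNReal.ofReal (Real.exp (-u / 4)) := by
  obtain ⟨hK0, hK1⟩ := hK
  have : (0 : ℝ) < n := Nat.cast_pos.mpr hn
  have : 0 < 1 - K := sub_pos.mpr hK1
  have := isProbabilityMeasure_iidGaussian (n := n) hC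
  have hmgf : ∀ t ∈ Set.Icc 0 (n * K / (2 * L)),
      mgf (fun X => (A * (sampleCov X - C)).trace) (iidGaussian n p C) t ∈
        Set.Ioc 0 (Real.exp (t ^ 2 * (2 * V / (n * (1 - K))) / 2)) := by
    rintro t ⟨ht0, ht⟩
    have htL : 2 * (|t| * ‖A * C‖) ≤ n * K := by
      rw [abs_of_nonneg ht0]
      calc 2 * (t * ‖A * C‖) ≤ 2 * (t * L) := by gcongr
        _ = t * (2 * L) := by ring
        _ ≤ n * K := (le_div_iff₀ (by positivity)).mp ht
    obtain ⟨hpos, hle⟩ := mgf_trace_mul_sampleCov_sub_mem_Ioc hn hC hA hK1 htL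
    refine ⟨hpos, hle.trans (Real.exp_le_exp.mpr ?_)⟩
    calc t ^ 2 * (A * C * (A * C)).trace / (n * (1 - K)) ≤ t ^ 2 * V / (n * (1 - K)) := by gcongr
      _ = t ^ 2 * (2 * V / (n * (1 - K))) / 2 := by ring
  have hthreshold : max (√(2 * (2 * V / (n * (1 - K))) * (u / 4)))
      (2 * (u / 4) / (n * K / (2 * L))) ≤ x := by
    convert hx using 2
    · rw [← Real.sqrt_mul' _ (by positivity)]
      congr 1
      field_simp
      ring
    · field_simp
      ring
  rw [← ofReal_measureReal, neg_div]
  -- `mgf` is `0` where the exponential is not integrable, so its positivity gives integrability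
  exact ENNReal.ofReal_le_ofReal <|
    measureReal_ge_le_exp_neg_of_mgf_le (by positivity) (by positivity)
      (fun t ht => ProbabilityTheory.mgf_pos_iff.mp (hmgf t ht).1) (fun t ht => (hmgf t ht).2)
      hthreshold

end SampleCovariance

section RowSums

open scoped Matrix.Norms.Operator

variable {l m n α : Type*} [Fintype l] [Fintype m] [Fintype n]

theorem sum_norm_apply_le_linfty_opNorm [SeminormedAddCommGroup α] (A : Matrix m n α) (i : m) :
    ∑ j, ‖A i j‖ ≤ ‖A‖ := by
  rw [linfty_opNorm_def]
  simpa using NNReal.coe_le_coe.mpr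
    (Finset.le_sup (f := fun i => ∑ j, ‖A i j‖₊) (Finset.mem_univ i))

theorem linfty_opNorm_le [SeminormedAddCommGroup α] {A : Matrix m n α} {r : ℝ} (hr : 0 ≤ r)
    (h : ∀ i, ∑ j, ‖A i j‖ ≤ r) : ‖A‖ ≤ r := by
  lift r to ℝ≥0 using hr
  rw [linfty_opNorm_def, NNReal.coe_le_coe]
  exact Finset.sup_le fun i _ => NNReal.coe_le_coe.mp (by simpa using h i)

theorem sum_comp_le_card_mul {ι β : Type*} [Fintype ι] [Zero β] [DecidableEq β] {g : ι → β}
    {f : β → ℝ} {b : ℝ} {r : ℕ} (hf : f 0 = 0) (hb : 0 ≤ b) (hfb : ∀ i, f (g i) ≤ b)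
    (hr : Finset.card {i | g i ≠ 0} ≤ r) : ∑ i, f (g i) ≤ r * b := by
  have hsupp : ∑ i with g i ≠ 0, f (g i) = ∑ i, f (g i) :=
    Finset.sum_filter_of_ne fun i _ hi h0 => hi (by rw [h0, hf])
  calc ∑ i, f (g i) ≤ Finset.card {i | g i ≠ 0} • b := by
        rw [← hsupp]
        exact Finset.sum_le_card_nsmul _ _ _ fun i _ => hfb i
    _ ≤ r * b := by rw [nsmul_eq_mul]; gcongr

theorem trace_mul_self_le_sum_sq (B : Matrix n n ℝ) : (B * B).trace ≤ ∑ i, ∑ j, B i j ^ 2 := by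
  have hswap : ∑ i, ∑ j, B j i ^ 2 = ∑ i, ∑ j, B i j ^ 2 := Finset.sum_comm
  calc (B * B).trace = ∑ i, ∑ j, B i j * B j i := by
        simp only [trace, diag_apply, mul_apply]
    _ ≤ ∑ i, ∑ j, (B i j ^ 2 + B j i ^ 2) / 2 := by
        gcongr with i _ j _
        linarith [two_mul_le_add_sq (B i j) (B j i)]
    _ = ∑ i, ∑ j, B i j ^ 2 := by
        simp only [← Finset.sum_div, Finset.sum_add_distrib, hswap]
        ring

/-- Schur's test for `v ↦ v ᵥ* C` on the Euclidean space. -/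
theorem sum_sq_vecMul_le_linfty_opNorm_mul (v : m → ℝ) (C : Matrix m n ℝ) :
    ∑ j, (v ᵥ* C) j ^ 2 ≤ ‖C‖ * ‖Cᵀ‖ * ∑ k, v k ^ 2 := by
  have hentry (j : n) : (v ᵥ* C) j ^ 2 ≤ ‖Cᵀ‖ * ∑ k, v k ^ 2 * ‖C k j‖ := by
    calc (v ᵥ* C) j ^ 2 ≤ (∑ k, ‖C k j‖) * ∑ k, v k ^ 2 * ‖C k j‖ := by
          refine Finset.sum_sq_le_sum_mul_sum_of_sq_le_mul _ (fun _ _ => norm_nonneg _)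
            (fun _ _ => by positivity) fun k _ => le_of_eq ?_
          rw [mul_pow, ← sq_abs (C k j), Real.norm_eq_abs]
          ring
      _ ≤ ‖Cᵀ‖ * ∑ k, v k ^ 2 * ‖C k j‖ := by
          gcongr
          exact sum_norm_apply_le_linfty_opNorm Cᵀ j
  calc ∑ j, (v ᵥ* C) j ^ 2 ≤ ∑ j, ‖Cᵀ‖ * ∑ k, v k ^ 2 * ‖C k j‖ :=
        Finset.sum_le_sum fun j _ => hentry j
    _ = ‖Cᵀ‖ * ∑ k, v k ^ 2 * ∑ j, ‖C k j‖ := by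
        rw [← Finset.mul_sum, Finset.sum_comm]
        simp only [Finset.mul_sum]
    _ ≤ ‖Cᵀ‖ * ∑ k, v k ^ 2 * ‖C‖ := by
        gcongr
        exact sum_norm_apply_le_linfty_opNorm C _
    _ = ‖C‖ * ‖Cᵀ‖ * ∑ k, v k ^ 2 := by rw [← Finset.sum_mul]; ring

theorem sum_sq_vecMul_le_of_sum_sq_le (v : m → ℝ) {C : Matrix m n ℝ} {c : ℝ}
    (hC : ∀ k, ∑ j, C k j ^ 2 ≤ c) : ∑ j, (v ᵥ* C) j ^ 2 ≤ (∑ k, ‖v k‖) ^ 2 * c := by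
  have hentry (j : n) : (v ᵥ* C) j ^ 2 ≤ (∑ k, ‖v k‖) * ∑ k, ‖v k‖ * C k j ^ 2 := by
    refine Finset.sum_sq_le_sum_mul_sum_of_sq_le_mul _ (fun _ _ => norm_nonneg _)
      (fun _ _ => by positivity) fun k _ => le_of_eq ?_
    rw [mul_pow, ← sq_abs (v k), Real.norm_eq_abs]
    ring
  calc ∑ j, (v ᵥ* C) j ^ 2 ≤ ∑ j, (∑ k, ‖v k‖) * ∑ k, ‖v k‖ * C k j ^ 2 :=
        Finset.sum_le_sum fun j _ => hentry j
    _ = (∑ k, ‖v k‖) * ∑ k, ‖v k‖ * ∑ j, C k j ^ 2 := by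
        rw [← Finset.mul_sum, Finset.sum_comm]
        simp only [Finset.mul_sum]
    _ ≤ (∑ k, ‖v k‖) * ∑ k, ‖v k‖ * c := by gcongr; exact hC _
    _ = (∑ k, ‖v k‖) ^ 2 * c := by rw [← Finset.sum_mul]; ring

theorem sum_sq_mul_apply_le_linfty_opNorm_mul (A : Matrix l m ℝ) (C : Matrix m n ℝ) :
    ∑ i, ∑ j, (A * C) i j ^ 2 ≤ ‖C‖ * ‖Cᵀ‖ * ∑ i, ∑ k, A i k ^ 2 := by
  rw [Finset.mul_sum]
  exact Finset.sum_le_sum fun i _ => sum_sq_vecMul_le_linfty_opNorm_mul (A i) C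

theorem sum_sq_mul_apply_le_of_sum_sq_le (A : Matrix l m ℝ) {C : Matrix m n ℝ} {c : ℝ}
    (hc : 0 ≤ c) (hC : ∀ k, ∑ j, C k j ^ 2 ≤ c) :
    ∑ i, ∑ j, (A * C) i j ^ 2 ≤ ‖A‖ * (∑ i, ∑ k, ‖A i k‖) * c := by
  calc ∑ i, ∑ j, (A * C) i j ^ 2 ≤ ∑ i, (∑ k, ‖A i k‖) ^ 2 * c :=
        Finset.sum_le_sum fun i _ => sum_sq_vecMul_le_of_sum_sq_le (A i) hC
    _ ≤ ∑ i, ‖A‖ * (∑ k, ‖A i k‖) * c := by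
        simp only [sq]
        gcongr with i
        exact sum_norm_apply_le_linfty_opNorm A i
    _ = ‖A‖ * (∑ i, ∑ k, ‖A i k‖) * c := by rw [← Finset.sum_mul, ← Finset.mul_sum]

end RowSums

section LagMatrix

open scoped Matrix.Norms.Operator

variable {p j S : ℕ} {W : Finset ℕ}

theorem card_natAbs_sub_eq_le_two (k : Fin p) (j : ℕ) :
    Finset.card {l : Fin p | ((k : ℤ) - l).natAbs = j} ≤ 2 := by
  have hmaps : Set.MapsTo (fun l : Fin p => (l : ℤ))
      ({l : Fin p | ((k : ℤ) - l).natAbs = j} : Finset (Fin p))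
      ({(k : ℤ) + j, (k : ℤ) - j} : Finset ℤ) := by
    intro l hl
    simp only [Finset.coe_filter_univ, Set.mem_ofPred_eq, Finset.coe_pair, Set.mem_insert_iff,
      Set.mem_singleton_iff] at hl ⊢
    omega
  exact (Finset.card_le_card_of_injOn _ hmaps fun l _ m _ h =>
    Fin.ext (Nat.cast_injective h)).trans Finset.card_le_two

theorem card_prod_natAbs_sub_eq_le (hj : 1 ≤ j) :
    Finset.card {x : Fin p × Fin p | ((x.1 : ℤ) - x.2).natAbs = j} ≤ 2 * (p - j) := by
  have hcard : (Finset.range (p - j) ×ˢ (Finset.univ : Finset Bool)).card = 2 * (p - j) := by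
    rw [Finset.card_product, Finset.card_range, Finset.card_univ, Fintype.card_bool, mul_comm]
  rw [← hcard]
  -- a pair at distance `j ≠ 0` is determined by its smaller entry and the order of its entries
  refine Finset.card_le_card_of_injOn
    (fun x => (min (x.1 : ℕ) x.2, decide ((x.1 : ℕ) < x.2))) ?_ ?_
  · rintro ⟨k, l⟩ hkl
    simp only [Finset.coe_filter_univ, Set.mem_ofPred_eq, Finset.coe_product, Finset.coe_range,
      Finset.coe_univ, Set.mem_prod, Set.mem_Iio, Set.mem_univ, and_true] at hkl ⊢
    omega
  · rintro ⟨k, l⟩ hkl ⟨k', l'⟩ hkl' h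
    simp only [Finset.coe_filter_univ, Set.mem_ofPred_eq, Prod.mk.injEq,
      decide_eq_decide] at hkl hkl' h
    rw [Prod.mk.injEq, Fin.ext_iff, Fin.ext_iff]
    omega

theorem lagMatrix_apply (p j : ℕ) (k l : Fin p) :
    lagMatrix p j k l = if ((k : ℤ) - l).natAbs = j then 1 / (2 * ((p : ℝ) - j)) else 0 := rfl

theorem isSymm_sum_lagMatrix (p : ℕ) (W : Finset ℕ) : (∑ j ∈ W, lagMatrix p j).IsSymm := by
  ext k l
  simp only [transpose_apply, Matrix.sum_apply, lagMatrix_apply]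
  rw [← Int.natAbs_neg, neg_sub]

theorem natAbs_sub_eq_of_lagMatrix_apply_ne_zero {k l : Fin p} (h : lagMatrix p j k l ≠ 0) :
    ((k : ℤ) - l).natAbs = j := by
  by_contra hkl
  exact h (if_neg hkl)

theorem norm_lagMatrix_apply_le (hj : j < p) (k l : Fin p) :
    ‖lagMatrix p j k l‖ ≤ 1 / (2 * ((p : ℝ) - j)) := by
  have hpj : (0 : ℝ) < p - j := sub_pos.mpr (Nat.cast_lt.mpr hj)
  rw [lagMatrix_apply]
  split_ifs
  · rw [Real.norm_of_nonneg (by positivity)]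
  · rw [norm_zero]
    positivity

theorem linfty_opNorm_lagMatrix_le (hj : j < p) : ‖lagMatrix p j‖ ≤ 1 / ((p : ℝ) - j) := by
  have hpj : (0 : ℝ) < p - j := sub_pos.mpr (Nat.cast_lt.mpr hj)
  refine linfty_opNorm_le (by positivity) fun k => ?_
  have hcard : Finset.card {l | lagMatrix p j k l ≠ 0} ≤ 2 :=
    (Finset.card_le_card <| Finset.monotone_filter_right _ fun _ _ =>
      natAbs_sub_eq_of_lagMatrix_apply_ne_zero).trans (card_natAbs_sub_eq_le_two k j)
  calc ∑ l, ‖lagMatrix p j k l‖ ≤ (2 : ℕ) * (1 / (2 * ((p : ℝ) - j))) :=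
        sum_comp_le_card_mul norm_zero (by positivity) (norm_lagMatrix_apply_le hj k) hcard
    _ = 1 / ((p : ℝ) - j) := by push_cast; field_simp

theorem sum_sum_comp_lagMatrix_apply_le (hj : 1 ≤ j) (hjp : j < p) {f : ℝ → ℝ} {b : ℝ}
    (hf : f 0 = 0) (hb : 0 ≤ b) (hfb : ∀ k l, f (lagMatrix p j k l) ≤ b) :
    ∑ k, ∑ l, f (lagMatrix p j k l) ≤ 2 * (p - j) * b := by
  have hcard : Finset.card {x : Fin p × Fin p | lagMatrix p j x.1 x.2 ≠ 0} ≤ 2 * (p - j) :=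
    (Finset.card_le_card <| Finset.monotone_filter_right _ fun _ _ =>
      natAbs_sub_eq_of_lagMatrix_apply_ne_zero).trans (card_prod_natAbs_sub_eq_le hj)
  rw [← Fintype.sum_prod_type' fun k l => f (lagMatrix p j k l)]
  calc ∑ x : Fin p × Fin p, f (lagMatrix p j x.1 x.2) ≤ (2 * (p - j) : ℕ) * b :=
        sum_comp_le_card_mul hf hb (fun x => hfb x.1 x.2) hcard
    _ = 2 * (p - j) * b := by rw [Nat.cast_mul, Nat.cast_ofNat, Nat.cast_sub hjp.le]

theorem sum_sum_norm_lagMatrix_le (hj : 1 ≤ j) (hjp : j < p) :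
    ∑ k, ∑ l, ‖lagMatrix p j k l‖ ≤ 1 := by
  have hpj : (0 : ℝ) < p - j := sub_pos.mpr (Nat.cast_lt.mpr hjp)
  calc ∑ k, ∑ l, ‖lagMatrix p j k l‖ ≤ 2 * (p - j) * (1 / (2 * ((p : ℝ) - j))) :=
        sum_sum_comp_lagMatrix_apply_le hj hjp norm_zero (by positivity)
          (norm_lagMatrix_apply_le hjp)
    _ = 1 := by field_simp

theorem sum_sum_lagMatrix_sq_le (hj : 1 ≤ j) (hjp : j < p) :
    ∑ k, ∑ l, lagMatrix p j k l ^ 2 ≤ 1 / (2 * ((p : ℝ) - j)) := by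
  have hpj : (0 : ℝ) < p - j := sub_pos.mpr (Nat.cast_lt.mpr hjp)
  calc ∑ k, ∑ l, lagMatrix p j k l ^ 2 ≤ 2 * (p - j) * (1 / (2 * ((p : ℝ) - j))) ^ 2 :=
        sum_sum_comp_lagMatrix_apply_le (f := (· ^ 2)) hj hjp (zero_pow two_ne_zero)
          (by positivity) fun k l => sq_le_sq.mpr
            ((norm_lagMatrix_apply_le hjp k l).trans (le_abs_self _))
    _ = 1 / (2 * ((p : ℝ) - j)) := by field_simp

theorem linfty_opNorm_sum_lagMatrix_le (hSp : S < p) (hW : W ⊆ Finset.Icc 1 S) :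
    ‖∑ j ∈ W, lagMatrix p j‖ ≤ W.card / ((p : ℝ) - S) := by
  have hpS : (0 : ℝ) < p - S := sub_pos.mpr (Nat.cast_lt.mpr hSp)
  rw [← mul_one_div, ← nsmul_eq_mul, ← Finset.sum_const]
  refine norm_sum_le_of_le W fun j hj => ?_
  have hjS := (Finset.mem_Icc.mp (hW hj)).2
  exact (linfty_opNorm_lagMatrix_le (hjS.trans_lt hSp)).trans (by gcongr)

theorem sum_sum_norm_sum_lagMatrix_le (hSp : S < p) (hW : W ⊆ Finset.Icc 1 S) :
    ∑ k, ∑ l, ‖(∑ j ∈ W, lagMatrix p j) k l‖ ≤ W.card := by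
  calc ∑ k, ∑ l, ‖(∑ j ∈ W, lagMatrix p j) k l‖
      ≤ ∑ k, ∑ l, ∑ j ∈ W, ‖lagMatrix p j k l‖ := by
        gcongr with k _ l _
        rw [Matrix.sum_apply]
        exact norm_sum_le _ _
    _ = ∑ j ∈ W, ∑ k, ∑ l, ‖lagMatrix p j k l‖ := by
        simp only [Finset.sum_comm (t := W)]
    _ ≤ ∑ j ∈ W, 1 := by
        gcongr with j hj
        obtain ⟨hj1, hjS⟩ := Finset.mem_Icc.mp (hW hj)
        exact sum_sum_norm_lagMatrix_le hj1 (hjS.trans_lt hSp)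
    _ = W.card := by rw [Finset.sum_const, nsmul_one]

theorem sum_lagMatrix_apply_sq (W : Finset ℕ) (k l : Fin p) :
    (∑ j ∈ W, lagMatrix p j) k l ^ 2 = ∑ j ∈ W, lagMatrix p j k l ^ 2 := by
  simp only [Matrix.sum_apply, lagMatrix_apply, ite_pow, Finset.sum_ite_eq, zero_pow two_ne_zero]

theorem sum_sum_sum_lagMatrix_sq_le (hSp : S < p) (hW : W ⊆ Finset.Icc 1 S) :
    ∑ k, ∑ l, (∑ j ∈ W, lagMatrix p j) k l ^ 2 ≤ W.card / (2 * ((p : ℝ) - S)) := by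
  have hpS : (0 : ℝ) < p - S := sub_pos.mpr (Nat.cast_lt.mpr hSp)
  calc ∑ k, ∑ l, (∑ j ∈ W, lagMatrix p j) k l ^ 2
      = ∑ j ∈ W, ∑ k, ∑ l, lagMatrix p j k l ^ 2 := by
        simp only [sum_lagMatrix_apply_sq, Finset.sum_comm (t := W)]
    _ ≤ ∑ j ∈ W, 1 / (2 * ((p : ℝ) - S)) := by
        gcongr with j hj
        obtain ⟨hj1, hjS⟩ := Finset.mem_Icc.mp (hW hj)
        exact (sum_sum_lagMatrix_sq_le hj1 (hjS.trans_lt hSp)).trans (by gcongr)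
    _ = W.card / (2 * ((p : ℝ) - S)) := by
        rw [Finset.sum_const, nsmul_eq_mul, mul_one_div]

end LagMatrix

section SparseCovariance

open scoped Matrix.Norms.Operator

variable {n : Type*} {C : Matrix n n ℝ} {a : ℝ} {r : ℕ}

theorem abs_apply_le_of_posSemidef (hC : C.PosSemidef) (hdiag : ∀ i, C i i ≤ a) (i j : n) :
    |C i j| ≤ a := by
  have hsym : C j i = C i j := by simpa only [star_trivial] using hC.isHermitian.apply i j
  have hi : 0 ≤ C i i := hC.diag_nonneg
  have hj : 0 ≤ C j j := hC.diag_nonneg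
  have hdet := (hC.submatrix ![i, j]).det_nonneg
  simp only [det_fin_two, submatrix_apply, cons_val_zero, cons_val_one, hsym] at hdet
  refine abs_le_of_sq_le_sq ?_ (hi.trans (hdiag i))
  calc C i j ^ 2 ≤ C i i * C j j := by linarith
    _ ≤ a * a := mul_le_mul (hdiag i) (hdiag j) hj (hi.trans (hdiag i))
    _ = a ^ 2 := (sq a).symm

variable [Fintype n]

theorem linfty_opNorm_le_of_posSemidef (hC : C.PosSemidef) (ha : 0 ≤ a)
    (hdiag : ∀ i, C i i ≤ a) (hr : ∀ k, Finset.card {l | C k l ≠ 0} ≤ r) : ‖C‖ ≤ r * a :=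
  linfty_opNorm_le (by positivity) fun k =>
    sum_comp_le_card_mul norm_zero ha (abs_apply_le_of_posSemidef hC hdiag k) (hr k)

theorem sum_apply_sq_le_of_posSemidef (hC : C.PosSemidef) (hdiag : ∀ i, C i i ≤ a)
    (hr : ∀ k, Finset.card {l | C k l ≠ 0} ≤ r) (k : n) : ∑ l, C k l ^ 2 ≤ r * a ^ 2 :=
  sum_comp_le_card_mul (f := (· ^ 2)) (zero_pow two_ne_zero) (sq_nonneg a)
    (fun l => sq_le_sq.mpr ((abs_apply_le_of_posSemidef hC hdiag k l).trans (le_abs_self a)))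
    (hr k)

theorem memF.apply_self {p s S : ℕ} {σ σ0 : ℝ} {C : Matrix (Fin p) (Fin p) ℝ}
    (h : memF p s S σ σ0 C) (i : Fin p) : C i i = σ0 := by
  obtain ⟨-, v, hv0, hv, -⟩ := h
  rw [hv, sub_self, Int.natAbs_zero, hv0]

theorem memF.card_apply_ne_zero_le {p s S : ℕ} {σ σ0 : ℝ} {C : Matrix (Fin p) (Fin p) ℝ}
    (h : memF p s S σ σ0 C) (k : Fin p) : Finset.card {l | C k l ≠ 0} ≤ 2 * s + 1 := by
  obtain ⟨-, v, -, hv, T, -, hTs, -, hT0⟩ := h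
  have hsub : ({l | C k l ≠ 0} : Finset (Fin p)) ⊆
      insert k (T.biUnion fun j => {l : Fin p | ((k : ℤ) - l).natAbs = j}) := by
    intro l hl
    rw [Finset.mem_filter_univ, hv] at hl
    rw [Finset.mem_insert, Finset.mem_biUnion, or_iff_not_imp_left, Fin.ext_iff]
    intro hlk
    refine ⟨_, ?_, Finset.mem_filter_univ _ |>.mpr rfl⟩
    by_contra hT
    exact hl (hT0 _ (by omega) (by omega) hT)
  calc _ ≤ _ := Finset.card_le_card hsub
    _ ≤ _ := Finset.card_insert_le _ _
    _ ≤ T.card * 2 + 1 := by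
        gcongr
        exact Finset.card_biUnion_le_card_mul _ _ _ fun j _ => card_natAbs_sub_eq_le_two k j
    _ = 2 * s + 1 := by rw [hTs, mul_comm]

end SparseCovariance

section LagMatrixMul

open scoped Matrix.Norms.Operator

variable {p S : ℕ} {C : Matrix (Fin p) (Fin p) ℝ} {W : Finset ℕ} {c : ℝ}

theorem linfty_opNorm_sum_lagMatrix_mul_le (hSp : S < p) (hW : W ⊆ Finset.Icc 1 S)
    (hC : ‖C‖ ≤ c) : ‖(∑ j ∈ W, lagMatrix p j) * C‖ ≤ W.card / ((p : ℝ) - S) * c :=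
  (norm_mul_le _ _).trans <|
    mul_le_mul (linfty_opNorm_sum_lagMatrix_le hSp hW) hC (norm_nonneg _)
      ((norm_nonneg _).trans (linfty_opNorm_sum_lagMatrix_le hSp hW))

theorem trace_sum_lagMatrix_mul_sq_le_of_sum_sq_le (hSp : S < p) (hW : W ⊆ Finset.Icc 1 S)
    (hc : 0 ≤ c) (hC : ∀ k, ∑ l, C k l ^ 2 ≤ c) :
    ((∑ j ∈ W, lagMatrix p j) * C * ((∑ j ∈ W, lagMatrix p j) * C)).trace ≤
      W.card / ((p : ℝ) - S) * W.card * c := by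
  have hpS : (0 : ℝ) < p - S := sub_pos.mpr (Nat.cast_lt.mpr hSp)
  refine ((trace_mul_self_le_sum_sq _).trans (sum_sq_mul_apply_le_of_sum_sq_le _ hc hC)).trans ?_
  gcongr
  · exact linfty_opNorm_sum_lagMatrix_le hSp hW
  · exact sum_sum_norm_sum_lagMatrix_le hSp hW

theorem trace_sum_lagMatrix_mul_sq_le_of_norm_le (hSp : S < p) (hW : W ⊆ Finset.Icc 1 S)
    (hsymm : C.IsSymm) (hC : ‖C‖ ≤ c) :
    ((∑ j ∈ W, lagMatrix p j) * C * ((∑ j ∈ W, lagMatrix p j) * C)).trace ≤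
      c * c * (W.card / (2 * ((p : ℝ) - S))) := by
  have hc : 0 ≤ c := (norm_nonneg C).trans hC
  refine ((trace_mul_self_le_sum_sq _).trans
    (sum_sq_mul_apply_le_linfty_opNorm_mul _ _)).trans ?_
  rw [hsymm.eq]
  gcongr
  exact sum_sum_sum_lagMatrix_sq_le hSp hW

end LagMatrixMul

theorem max_sqrt_mul_sqrt_sq_mul {c : ℝ} (hc : 0 ≤ c) (y v z l : ℝ) :
    max (√y * √(c ^ 2 * v)) (z * (c * l)) = c * max (√y * √v) (z * l) := by
  rw [Real.sqrt_mul (sq_nonneg c), Real.sqrt_sq hc, mul_max_of_nonneg _ _ hc, mul_left_comm,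
    mul_left_comm z]

theorem deviation_alt_lagMatrix_sum_general {p n S r : ℕ} (hn : 0 < n) (hSp : S < p)
    {C : Matrix (Fin p) (Fin p) ℝ} (hC : C.PosDef) {a : ℝ} (hdiag : ∀ i, C i i ≤ a)
    (hr : ∀ k, Finset.card {l | C k l ≠ 0} ≤ r)
    {W : Finset ℕ} (hW : W ⊆ Finset.Icc 1 S) (hw : W.Nonempty)
    {K : ℝ} (hK : K ∈ Set.Ioo 0 1) (u : ℝ) :
    iidGaussian n p C {X | a * (W.card *
          max (√(u / (1 - K)) * √(r / (n * ((p : ℝ) - S)))) (u / K * r / (n * ((p : ℝ) - S)))) ≤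
        ((∑ j ∈ W, lagMatrix p j) * (sampleCov X - C)).trace} ≤
      ENNReal.ofReal (Real.exp (-u / 4)) ∧
    iidGaussian n p C {X | a * (r *
          max (√(u / (2 * (1 - K))) * √(W.card / (n * ((p : ℝ) - S))))
            (u / K * W.card / (n * ((p : ℝ) - S)))) ≤
        ((∑ j ∈ W, lagMatrix p j) * (sampleCov X - C)).trace} ≤
      ENNReal.ofReal (Real.exp (-u / 4)) := by
  have hpS : (0 : ℝ) < p - S := sub_pos.mpr (Nat.cast_lt.mpr hSp)
  have : (0 : ℝ) < n := Nat.cast_pos.mpr hn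
  have : (0 : ℝ) < W.card := Nat.cast_pos.mpr hw.card_pos
  have : 0 < 1 - K := sub_pos.mpr hK.2
  have ha : 0 < a := hC.diag_pos.trans_le (hdiag ⟨S, hSp⟩)
  have : (0 : ℝ) < r := Nat.cast_pos.mpr <|
    (Finset.card_pos.mpr ⟨⟨S, hSp⟩, by simpa using hC.diag_pos.ne'⟩).trans_le (hr ⟨S, hSp⟩)
  have hCr := linfty_opNorm_le_of_posSemidef hC.posSemidef ha.le hdiag hr
  have hL := linfty_opNorm_sum_lagMatrix_mul_le hSp hW hCr
  have hV₁ := trace_sum_lagMatrix_mul_sq_le_of_sum_sq_le hSp hW (by positivity)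
    (sum_apply_sq_le_of_posSemidef hC.posSemidef hdiag hr)
  have hV₂ := trace_sum_lagMatrix_mul_sq_le_of_norm_le hSp hW
    (isHermitian_iff_isSymm.mp hC.isHermitian) hCr
  constructor
  · refine iidGaussian_trace_ge_le hn hC (isSymm_sum_lagMatrix p W) hL (by positivity) hV₁
      (by positivity) hK (le_of_eq ?_)
    rw [← mul_assoc a, mul_div_assoc (u / K), ← max_sqrt_mul_sqrt_sq_mul (by positivity)]
    congr 3 <;> field_simp
  · refine iidGaussian_trace_ge_le hn hC (isSymm_sum_lagMatrix p W) hL (by positivity) hV₂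
      (by positivity) hK (le_of_eq ?_)
    rw [← mul_assoc a, mul_div_assoc (u / K),
      ← max_sqrt_mul_sqrt_sq_mul (by positivity), ← Real.sqrt_mul' _ (by positivity),
      ← Real.sqrt_mul' _ (by positivity)]
    congr 2 <;> field_simp

/-- Deviation bound for `Tr(A_W(Σ_n − Σ))` under `Σ ∈ F(s,S,σ)`. -/
theorem deviation_alt_lagMatrix_sum {p n s S : ℕ} (hn : 0 < n) (hs : 1 ≤ s)
    (hsS : s ≤ S) (hS : (S : ℝ) < (p:ℝ)/2)
    (σ σ0 : ℝ) (hσ : 0 < σ) (hσ0 : 0 < σ0)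
    (Cov : Matrix (Fin p) (Fin p) ℝ) (hCov : memF p s S σ σ0 Cov)
    (W : Finset ℕ) (hW : W ⊆ Finset.Icc 1 S) (hw : 1 ≤ W.card)
    (K u : ℝ) (hK : K ∈ Set.Ioo (0:ℝ) 1) (hu : 0 < u) :
    (W.card = 1 →
      (iidGaussian n p Cov) {X |
          Matrix.trace ((∑ j ∈ W, lagMatrix p j) * (sampleCov X - Cov)) ≥
        σ0 * max (Real.sqrt (u / (1 - K)) * Real.sqrt ((2 * s + 1) / (n * ((p:ℝ) - S))))
          ((u / K) * (2 * s + 1) / (n * ((p:ℝ) - S)))}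
        ≤ ENNReal.ofReal (Real.exp (-u/4))) ∧
    (1 < W.card →
      (iidGaussian n p Cov) {X |
          Matrix.trace ((∑ j ∈ W, lagMatrix p j) * (sampleCov X - Cov)) ≥
        σ0 * ((2 * s + 1) *
          max (Real.sqrt (u / (2 * (1 - K))) * Real.sqrt ((W.card : ℝ) / (n * ((p:ℝ) - S))))
            ((u / K) * (W.card : ℝ) / (n * ((p:ℝ) - S))))}
        ≤ ENNReal.ofReal (Real.exp (-u/4))) := by
  have hSp : S < p := by
    have : (S : ℝ) < p := by linarith [Nat.cast_nonneg (α := ℝ) S]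
    exact_mod_cast this
  obtain ⟨h₁, h₂⟩ := deviation_alt_lagMatrix_sum_general hn hSp hCov.1
    (fun i => (hCov.apply_self i).le) hCov.card_apply_ne_zero_le hW (Finset.card_pos.mp hw) hK u
  push_cast at h₁ h₂
  exact ⟨fun h => by simpa only [h, Nat.cast_one, one_mul] using h₁, fun _ => h₂⟩
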